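/- For every n ≥ 1 and every word w of length n, maxocc(w) ≤ C(n, ⌈n/2⌉) (the binomial coefficient), and equality holds if and only if all letters of w are equal, i.e., w = aⁿ for some letter a. -/

import Mathlib

/-!
An occurrence of `u` in `w` is a `|u|`-element set of positions of `w`, so
`occ w u ≤ C(|w|, |u|) ≤ C(n, ⌈n/2⌉)`. If equality holds for `n ≥ 2`, a maximizing `u` satisfies
`0 < |u| < n` (otherwise `C(n, |u|) ≤ 1`), and every `|u|`-element set of positions spells `u`,
which forces all letters of `w` to be equal (`eq_replicate_of_occ_eq_choose`). Conversely
`occ (aⁿ) (aᵏ) = C(n, k)`. The facts about `occ` are proved by induction on `w` from the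
Pascal-type recurrence `occ_cons_cons`.
-/

open List Real

/-- `occ w u` is the number of occurrences of `u` as a subword (subsequence) of `w`,
i.e. the multiplicity of `u` among the `2^|w|` sublists of `w`. -/
def occ {α : Type*} [DecidableEq α] (w u : List α) : ℕ := w.sublists.count u

/-- `maxocc w` is the maximal number of occurrences of any subword of `w`. -/
noncomputable def maxocc {α : Type*} [DecidableEq α] (w : List α) : ℕ :=
  sSup {n : ℕ | ∃ u : List α, occ w u = n}

section Occ

variable {α : Type*} [DecidableEq α]

theorem occ_eq_count_sublists' (w u : List α) : occ w u = w.sublists'.count u :=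
  (sublists_perm_sublists' w).count_eq u

theorem occ_nil_cons (b : α) (u : List α) : occ [] (b :: u) = 0 := by
  simp [occ]

theorem occ_nil_right (w : List α) : occ w [] = 1 := by
  rw [occ_eq_count_sublists']
  induction w with
  | nil => simp
  | cons a w ih =>
    rw [sublists'_cons, count_append, ih, Nat.add_eq_left, count_eq_zero]
    simp

/-- The occurrences of `b :: u` in `a :: w` are split according to whether they use the first
position. -/
theorem occ_cons_cons (a b : α) (w u : List α) :
    occ (a :: w) (b :: u) = occ w (b :: u) + if a = b then occ w u else 0 := by
  simp only [occ_eq_count_sublists', sublists'_cons, count_append, Nat.add_left_cancel_iff]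
  split_ifs with h
  · subst h
    exact count_map_of_injective _ _ (fun _ _ h => (cons.inj h).2) u
  · rw [count_eq_zero]
    simp [h]

theorem occ_le_choose (w u : List α) : occ w u ≤ w.length.choose u.length := by
  induction w generalizing u with
  | nil => cases u <;> simp [occ_nil_cons, occ_nil_right]
  | cons a w ih =>
    cases u with
    | nil => simp [occ_nil_right]
    | cons b u =>
      have h1 := ih (b :: u)
      have h2 := ih u
      simp only [length_cons] at h1
      rw [occ_cons_cons, length_cons, length_cons, Nat.choose_succ_succ']
      split_ifs <;> omega

theorem occ_replicate (a : α) (n k : ℕ) :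
    occ (replicate n a) (replicate k a) = n.choose k := by
  induction n generalizing k with
  | zero => cases k <;> simp [replicate_succ, occ_nil_cons, occ_nil_right]
  | succ n ih =>
    cases k with
    | zero => simp [occ_nil_right]
    | succ k =>
      rw [replicate_succ, replicate_succ, occ_cons_cons, if_pos rfl, ← replicate_succ, ih, ih,
        Nat.choose_succ_succ', add_comm]

/-- If every set of `|u|` positions of `w` spells `u`, and `0 < |u| < |w|`, then `w` is constant.
Both terms of the recurrence must be maximal, so the induction hypothesis applies to the tail of
`w`, with `u` or with its tail; the common letter is identified because the first letter of `u`
occurs in the tail of `w`. -/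
theorem eq_replicate_of_occ_eq_choose (w u : List α) (h0 : 0 < u.length)
    (h1 : u.length < w.length) (h : occ w u = w.length.choose u.length) :
    ∃ a, w = replicate w.length a := by
  induction w generalizing u with
  | nil => simp at h1
  | cons a w ih =>
    cases u with
    | nil => simp at h0
    | cons b u =>
      have e1 := occ_le_choose w (b :: u)
      have e2 := occ_le_choose w u
      rw [occ_cons_cons, length_cons, length_cons, Nat.choose_succ_succ'] at h
      simp only [length_cons] at h1 e1
      have p1 : 0 < w.length.choose u.length := Nat.choose_pos (by omega)
      have p2 : 0 < w.length.choose (u.length + 1) := Nat.choose_pos (by omega)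
      split_ifs at h with hab
      · subst hab
        have f1 : occ w (a :: u) = w.length.choose (u.length + 1) := by omega
        have f2 : occ w u = w.length.choose u.length := by omega
        have hmem : a ∈ w := by
          have : a :: u ∈ w.sublists := count_pos_iff.1 (by rw [← f1] at p2; exact p2)
          exact (mem_sublists.1 this).subset mem_cons_self
        have hw : ∃ c, w = replicate w.length c := by
          by_cases hlt : u.length + 1 < w.length
          · exact ih (a :: u) (by simp) (by simpa using hlt) (by simpa using f1)
          · by_cases hu : 0 < u.length
            · exact ih u hu (by omega) f2
            · have hl : w.length = 1 := by omega
              obtain ⟨c, rfl⟩ := length_eq_one_iff.1 hl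
              exact ⟨c, rfl⟩
        obtain ⟨c, hc⟩ := hw
        rw [hc] at hmem
        obtain rfl := eq_of_mem_replicate hmem
        exact ⟨a, by rw [length_cons, replicate_succ, ← hc]⟩
      · omega

theorem choose_le_choose_ceil_half (n k : ℕ) : n.choose k ≤ n.choose ((n + 1) / 2) := by
  rw [Nat.choose_symm_of_eq_add (show n = (n + 1) / 2 + n / 2 by omega)]
  exact Nat.choose_le_middle k n

theorem occ_le_choose_ceil_half (w u : List α) :
    occ w u ≤ w.length.choose ((w.length + 1) / 2) :=
  (occ_le_choose w u).trans (choose_le_choose_ceil_half _ _)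

theorem bddAbove_occ (w : List α) : BddAbove {n : ℕ | ∃ u : List α, occ w u = n} :=
  ⟨_, by rintro _ ⟨u, rfl⟩; exact occ_le_choose_ceil_half w u⟩

theorem exists_occ_eq_maxocc (w : List α) : ∃ u, occ w u = maxocc w :=
  Nat.sSup_mem (s := {n : ℕ | ∃ u : List α, occ w u = n}) ⟨_, [], rfl⟩ (bddAbove_occ w)

theorem occ_le_maxocc (w u : List α) : occ w u ≤ maxocc w :=
  le_csSup (bddAbove_occ w) ⟨u, rfl⟩

end Occ

theorem stmt_2 {α : Type*} [DecidableEq α] (n : ℕ) (hn : 1 ≤ n) (w : List α)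
    (hw : w.length = n) :
    maxocc w ≤ n.choose ((n + 1) / 2) ∧
      (maxocc w = n.choose ((n + 1) / 2) ↔ ∃ a : α, w = List.replicate n a) := by
  subst hw
  obtain ⟨u, hu⟩ := exists_occ_eq_maxocc w
  have hle : maxocc w ≤ w.length.choose ((w.length + 1) / 2) := hu ▸ occ_le_choose_ceil_half w u
  refine ⟨hle, fun h => ?_, ?_⟩
  · by_cases h1 : w.length = 1
    · obtain ⟨c, rfl⟩ := length_eq_one_iff.1 h1
      exact ⟨c, rfl⟩
    · have hocc := occ_le_choose w u
      have hmid := choose_le_choose_ceil_half w.length u.length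
      -- The central binomial coefficient is at least `C(n, 1) = n ≥ 2`.
      have hone := choose_le_choose_ceil_half w.length 1
      rw [Nat.choose_one_right] at hone
      refine eq_replicate_of_occ_eq_choose w u ?_ ?_ (by omega)
      · by_contra h0
        rw [show u.length = 0 by omega, Nat.choose_zero_right] at hocc
        omega
      · by_contra h0
        have : w.length.choose u.length ≤ 1 := by
          rcases eq_or_lt_of_le (not_lt.1 h0) with h2 | h2
          · rw [← h2, Nat.choose_self]
          · rw [Nat.choose_eq_zero_of_lt h2]; omega
        omega
  · rintro ⟨a, ha⟩
    refine le_antisymm hle ?_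
    have h := occ_le_maxocc w (replicate ((w.length + 1) / 2) a)
    rwa [show occ w _ = _ from (congrArg (occ · _) ha).trans (occ_replicate a _ _)] at h
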